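/- arXiv:2403.02986 — 2 statements merged into one kernel-verified Lean document; each statement's English description precedes it below -/
import Mathlib

section
/- Let α ∈ S_n be a regular quasi-diagram. Then for every i ∈ {1,…,n+1}, the i-expansion ι_i(α) ∈ S_{n+1} is a regular quasi-diagram. -/
/-- The cycle `ϑ_{i,n+1} = (i, i+1, …, n+1)` of `S_{n+1}`; 0-indexed on `Fin (n+1)` it is the
cycle `(a, a+1, …, Fin.last n)` where `a` corresponds to `i`. -/
def vartheta {n : ℕ} (a : Fin (n + 1)) : Equiv.Perm (Fin (n + 1)) :=
  Fin.revPerm * (Fin.cycleRange a.rev)⁻¹ * Fin.revPerm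

/-- A permutation of `Fin n` regarded as a permutation of `Fin (n+1)` fixing the last point. -/
def castPerm {n : ℕ} (α : Equiv.Perm (Fin n)) : Equiv.Perm (Fin (n + 1)) :=
  α.viaFintypeEmbedding Fin.castSuccEmb

/-- The `i`-expansion `ι_i(α) = ϑ_{i,n+1} α ϑ_{i,n+1}⁻¹` of a quasi-diagram `α ∈ S_n`. -/
def expand {n : ℕ} (a : Fin (n + 1)) (α : Equiv.Perm (Fin n)) : Equiv.Perm (Fin (n + 1)) :=
  vartheta a * castPerm α * (vartheta a)⁻¹

/-- `β` is regular with respect to the distinguished point `p` (the point "1"): every orbit of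
`ζβ` contains `p` or an isolated point of `β`. -/
def RegularAt {m : ℕ} (β : Equiv.Perm (Fin m)) (p : Fin m) : Prop :=
  ∀ x : Fin m, ∃ y : Fin m, (finRotate m * β).SameCycle x y ∧ (y = p ∨ β y = y)

lemma vartheta_last {n : ℕ} (a : Fin (n + 1)) : vartheta a (Fin.last n) = a := by
  simp [vartheta, Fin.revPerm_apply, Equiv.Perm.mul_apply, Equiv.Perm.inv_def]

lemma vartheta_castSucc {n : ℕ} (a : Fin (n + 1)) (j : Fin n) :
    vartheta a j.castSucc = a.succAbove j := by
  simp [vartheta, Fin.revPerm_apply, Equiv.Perm.mul_apply, Equiv.Perm.inv_def, Fin.rev_castSucc,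
    Fin.rev_succAbove]

lemma castPerm_castSucc {n : ℕ} (α : Equiv.Perm (Fin n)) (j : Fin n) :
    castPerm α j.castSucc = (α j).castSucc :=
  Equiv.Perm.viaFintypeEmbedding_apply_image α Fin.castSuccEmb j

lemma castPerm_last {n : ℕ} (α : Equiv.Perm (Fin n)) :
    castPerm α (Fin.last n) = Fin.last n := by
  apply Equiv.Perm.viaFintypeEmbedding_apply_notMem_range
  rintro ⟨x, hx⟩
  exact (Fin.castSucc_lt_last x).ne hx

lemma expand_self {n : ℕ} (a : Fin (n + 1)) (α : Equiv.Perm (Fin n)) : expand a α a = a := by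
  have h : (vartheta a)⁻¹ a = Fin.last n := by
    rw [Equiv.Perm.inv_eq_iff_eq, vartheta_last]
  simp only [expand, Equiv.Perm.mul_apply, h, castPerm_last, vartheta_last]

lemma expand_succAbove {n : ℕ} (a : Fin (n + 1)) (α : Equiv.Perm (Fin n)) (j : Fin n) :
    expand a α (a.succAbove j) = a.succAbove (α j) := by
  have h : (vartheta a)⁻¹ (a.succAbove j) = j.castSucc := by
    rw [Equiv.Perm.inv_eq_iff_eq, vartheta_castSucc]
  simp only [expand, Equiv.Perm.mul_apply, h, castPerm_castSucc, vartheta_castSucc]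

lemma rotate_succAbove {m : ℕ} (a : Fin (m + 2)) (j : Fin (m + 1)) :
    finRotate (m + 2) (a.succAbove j) = a.succAbove (finRotate (m + 1) j) ∨
    (finRotate (m + 2) (a.succAbove j) = a ∧
      finRotate (m + 2) a = a.succAbove (finRotate (m + 1) j)) := by
  simp only [Fin.ext_iff, coe_finRotate, Fin.succAbove, Fin.lt_def, Fin.val_castSucc, Fin.val_last,
    apply_ite Fin.val, Fin.val_succ]
  have := a.isLt
  have := j.isLt
  split_ifs <;> omega

theorem stmt_10 (n : ℕ) (hn : 0 < n) (α : Equiv.Perm (Fin n))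
    (hα : ∀ x, α (α x) = x)
    (hreg : RegularAt α ⟨0, hn⟩) :
    ∀ a : Fin (n + 1), RegularAt (expand a α) (0 : Fin (n + 1)) := by
  intro a
  obtain ⟨m, rfl⟩ : ∃ m, n = m + 1 := ⟨n - 1, by omega⟩
  set f := finRotate (m + 1 + 1) * expand a α with hf
  have hfa : f a = finRotate (m + 2) a := by
    rw [hf, Equiv.Perm.mul_apply, expand_self]
  have step : ∀ j, f.SameCycle (a.succAbove j)
      (a.succAbove ((finRotate (m + 1) * α) j)) := by
    intro j
    have h1 : f (a.succAbove j) = finRotate (m + 2) (a.succAbove (α j)) := by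
      rw [hf, Equiv.Perm.mul_apply, expand_succAbove]
    rcases rotate_succAbove a (α j) with h | ⟨h, h'⟩
    · exact ⟨1, by rw [zpow_one, h1, h]; rfl⟩
    · exact ⟨2, by rw [zpow_two, Equiv.Perm.mul_apply, h1, h, hfa, h']; rfl⟩
  have lift : ∀ x y, (finRotate (m + 1) * α).SameCycle x y →
      f.SameCycle (a.succAbove x) (a.succAbove y) := by
    intro x y hxy
    obtain ⟨k, rfl⟩ := hxy.exists_nat_pow_eq
    induction k with
    | zero => exact Equiv.Perm.SameCycle.refl _ _
    | succ k ih =>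
      rw [pow_succ', Equiv.Perm.mul_apply]
      exact (ih ⟨k, by simp⟩).trans (step _)
  intro x
  rcases Fin.eq_self_or_eq_succAbove a x with rfl | ⟨j, rfl⟩
  · exact ⟨x, Equiv.Perm.SameCycle.refl _ _, Or.inr (expand_self _ _)⟩
  · obtain ⟨y, hy, h⟩ := hreg j
    by_cases hfix : α y = y
    · exact ⟨_, lift _ _ hy, Or.inr (by rw [expand_succAbove, hfix])⟩
    · have hy0 : y = 0 := by
        rcases h with h | h
        · exact h
        · exact absurd h hfix
      subst hy0
      by_cases ha : a = 0
      · subst ha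
        refine ⟨0, (lift _ _ hy).trans (Equiv.Perm.SameCycle.symm ⟨1, ?_⟩), Or.inl rfl⟩
        rw [zpow_one, hfa]
        simp
      · exact ⟨_, lift _ _ hy, Or.inl (Fin.succAbove_ne_zero_zero ha)⟩
end

section
/- Let α ∈ S_{2m} be a chord diagram (m ≥ 1). Then the following are equivalent: (1) α is maximal; (2) α is regular; (3) α is rotatably regular; (4) the l-th rotation ζ^l α ζ^{−l} is maximal for every l ∈ ℤ. -/
theorem regularAt_iff_of_free {m : ℕ} (β : Equiv.Perm (Fin m)) (p : Fin m)
    (hfree : ∀ i, β i ≠ i) :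
    RegularAt β p ↔ ∀ x y : Fin m, (finRotate m * β).SameCycle x y := by
  constructor
  · intro h
    have key : ∀ x, (finRotate m * β).SameCycle x p := by
      intro x
      obtain ⟨y, hxy, hy⟩ := h x
      rcases hy with rfl | hy
      · exact hxy
      · exact absurd hy (hfree y)
    exact fun x y => (key x).trans (key y).symm
  · exact fun h x => ⟨p, h x p, Or.inl rfl⟩

theorem rot_free {m : ℕ} (α : Equiv.Perm (Fin m)) (hfree : ∀ i, α i ≠ i) (l : ℤ) :
    ∀ i, (finRotate m ^ l * α * finRotate m ^ (-l)) i ≠ i := by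
  intro i hi
  apply hfree ((finRotate m ^ (-l)) i)
  rw [Equiv.Perm.mul_apply, Equiv.Perm.mul_apply] at hi
  rw [zpow_neg, Equiv.Perm.eq_inv_iff_eq, ← zpow_neg]
  exact hi

theorem rot_max {m : ℕ} (α : Equiv.Perm (Fin m)) (l : ℤ)
    (h : ∀ x y : Fin m, (finRotate m * α).SameCycle x y) :
    ∀ x y : Fin m, (finRotate m *
      (finRotate m ^ l * α * finRotate m ^ (-l))).SameCycle x y := by
  intro x y
  have e : finRotate m * (finRotate m ^ l * α * finRotate m ^ (-l)) =
      finRotate m ^ l * (finRotate m * α) * (finRotate m ^ l)⁻¹ := by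
    group
  rw [e, Equiv.Perm.sameCycle_conj]
  exact h _ _

/-- Let `α ∈ S_{2m}` (`m ≥ 1`) be a chord diagram (a fixed-point-free
involution of `Fin (2m)`, 0-indexed: point `1` is `⟨0, _⟩`; `ζ = finRotate (2m)`).  Then the
following are equivalent: (1) `α` is maximal (one orbit of `ζα`); (2) `α` is regular;
(3) `α` is rotatably regular; (4) every rotation `ζ^l α ζ^(-l)` (`l ∈ ℤ`) is maximal. -/
theorem stmt_16 (m : ℕ) (hm : 0 < m) (α : Equiv.Perm (Fin (2 * m)))
    (hα : ∀ i, α (α i) = i) (hfree : ∀ i, α i ≠ i) :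
    ((∀ x y : Fin (2 * m), (finRotate (2 * m) * α).SameCycle x y) ↔
      RegularAt α ⟨0, by omega⟩) ∧
    (RegularAt α ⟨0, by omega⟩ ↔
      (∀ l : ℤ, RegularAt (finRotate (2 * m) ^ l * α * finRotate (2 * m) ^ (-l))
        ⟨0, by omega⟩)) ∧
    ((∀ l : ℤ, RegularAt (finRotate (2 * m) ^ l * α * finRotate (2 * m) ^ (-l))
        ⟨0, by omega⟩) ↔
      (∀ l : ℤ, ∀ x y : Fin (2 * m),
        (finRotate (2 * m) *
          (finRotate (2 * m) ^ l * α * finRotate (2 * m) ^ (-l))).SameCycle x y)) := by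
  have h0 := regularAt_iff_of_free α ⟨0, by omega⟩ hfree
  have hl := fun l : ℤ => regularAt_iff_of_free
    (finRotate (2 * m) ^ l * α * finRotate (2 * m) ^ (-l)) ⟨0, by omega⟩ (rot_free α hfree l)
  refine ⟨h0.symm, ⟨fun h l => (hl l).2 (rot_max α l (h0.1 h)), fun h => ?_⟩,
    forall_congr' hl⟩
  simpa using h 0
end
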